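/- arXiv:2605.17847 — 3 statements merged into one kernel-verified Lean document; each statement's English description precedes it below -/
import Mathlib

section
/- The girth of the zero-divisor graph Γ(R) equals 3; in particular Γ(R) contains a triangle, for example on the vertices u, uv and u + uv. -/
/- `Rng p` models the ring `R = 𝔽_p[u,v]/⟨u², v², uv - vu⟩`:
every element is uniquely `a + b·u + c·v + d·uv` with `a b c d : ZMod p`. -/
set_option synthInstance.maxHeartbeats 1000000
set_option maxHeartbeats 1000000

abbrev Rng (p : ℕ) : Type := DualNumber (DualNumber (ZMod p))

/-- The element `u` of `R` (satisfies `u² = 0`). -/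
def uu (p : ℕ) : Rng p := TrivSqZeroExt.inl DualNumber.eps

/-- The element `v` of `R` (satisfies `v² = 0`). -/
def vv (p : ℕ) : Rng p := DualNumber.eps

/-- The vertex set `Z*(R)`: nonzero zero-divisors of `R`. -/
abbrev Vtx (p : ℕ) : Type := {x : Rng p // x ≠ 0 ∧ ∃ y : Rng p, y ≠ 0 ∧ x * y = 0}

/-- The zero-divisor graph `Γ(R)`. -/
def ZDG (p : ℕ) : SimpleGraph (Vtx p) where
  Adj a b := a ≠ b ∧ (a : Rng p) * (b : Rng p) = 0
  symm := ⟨fun a b h => ⟨h.1.symm, (mul_comm (b : Rng p) (a : Rng p)).trans h.2⟩⟩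
  loopless := ⟨fun a h => h.1 rfl⟩

instance (p : ℕ) : DecidableEq (Rng p) :=
  inferInstanceAs (DecidableEq ((ZMod p × ZMod p) × ZMod p × ZMod p))

instance (p : ℕ) [NeZero p] : Fintype (Rng p) :=
  inferInstanceAs (Fintype ((ZMod p × ZMod p) × ZMod p × ZMod p))

instance (p : ℕ) : DecidableRel (ZDG p).Adj :=
  fun a b => inferInstanceAs (Decidable (a ≠ b ∧ (a : Rng p) * (b : Rng p) = 0))

theorem uu_sq (p : ℕ) : uu p * uu p = 0 := by
  rw [uu, ← TrivSqZeroExt.inl_mul, DualNumber.eps_mul_eps, TrivSqZeroExt.inl_zero]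

theorem uv_ne (p : ℕ) [Fact p.Prime] : uu p * vv p ≠ 0 := by
  intro h
  have h2 := congrArg (fun x : Rng p => TrivSqZeroExt.snd (TrivSqZeroExt.snd x)) h
  simp [uu, vv] at h2

theorem uu_ne_uv (p : ℕ) [Fact p.Prime] : uu p ≠ uu p * vv p := by
  intro h
  have h2 := congrArg (fun x : Rng p => TrivSqZeroExt.snd (TrivSqZeroExt.fst x)) h
  simp [uu, vv] at h2

theorem uu_ne (p : ℕ) [Fact p.Prime] : uu p ≠ 0 := by
  intro h
  exact uv_ne p (by rw [h, zero_mul])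

theorem stmt5 (p : ℕ) [Fact p.Prime] (hodd : Odd p) :
    (ZDG p).girth = 3 ∧
      ∃ a b c : Vtx p, (a : Rng p) = uu p ∧ (b : Rng p) = uu p * vv p ∧
        (c : Rng p) = uu p + uu p * vv p ∧
        (ZDG p).Adj a b ∧ (ZDG p).Adj b c ∧ (ZDG p).Adj a c := by
  have sq := uu_sq p
  have h1 : uu p * (uu p * vv p) = 0 := by rw [← mul_assoc, sq, zero_mul]
  have h2 : uu p * (uu p + uu p * vv p) = 0 := by rw [mul_add, sq, h1, add_zero]
  have h3 : (uu p * vv p) * (uu p + uu p * vv p) = 0 := by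
    rw [mul_comm (uu p) (vv p), mul_assoc, mul_comm (vv p) (uu p), h2, mul_zero]
  have hc : uu p + uu p * vv p ≠ 0 := by
    intro h
    have h2 := congrArg (fun x : Rng p => TrivSqZeroExt.snd (TrivSqZeroExt.fst x)) h
    simp [uu, vv] at h2
  have tri : ∃ a b c : Vtx p, (a : Rng p) = uu p ∧ (b : Rng p) = uu p * vv p ∧
        (c : Rng p) = uu p + uu p * vv p ∧
        (ZDG p).Adj a b ∧ (ZDG p).Adj b c ∧ (ZDG p).Adj a c := by
    refine ⟨⟨uu p, uu_ne p, uu p, uu_ne p, sq⟩,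
      ⟨uu p * vv p, uv_ne p, uu p, uu_ne p, (mul_comm (uu p * vv p) (uu p)).trans h1⟩,
      ⟨uu p + uu p * vv p, hc, uu p, uu_ne p, (mul_comm (uu p + uu p * vv p) (uu p)).trans h2⟩, rfl, rfl, rfl,
      ⟨?_, h1⟩, ⟨?_, h3⟩, ⟨?_, h2⟩⟩
    · intro h
      exact uu_ne_uv p (congrArg Subtype.val h)
    · intro h
      have h := congrArg Subtype.val h
      exact uu_ne p (right_eq_add.mp h)
    · intro h
      have h := congrArg Subtype.val h
      exact uv_ne p (left_eq_add.mp h)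
  refine ⟨?_, tri⟩
  obtain ⟨a, b, c, -, -, -, hab, hbc, hac⟩ := tri
  have hcyc : (SimpleGraph.Walk.cons hab (.cons hbc (.cons hac.symm .nil))).IsCycle := by
    have := hab.ne
    have := hbc.ne
    have := hac.ne
    simp [SimpleGraph.Walk.cons_isCycle_iff]
    grind
  apply le_antisymm
  · exact SimpleGraph.girth_le_length hcyc
  · exact SimpleGraph.three_le_girth fun h => h _ hcyc
end

section
/- Every vertex of Γ(R) that is not of the form x·uv with x ∈ 𝔽_p* has eccentricity exactly 2 in Γ(R). -/
/- `Rng p` models the ring `R = 𝔽_p[u,v]/⟨u², v², uv - vu⟩`: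
every element is uniquely `a + b·u + c·v + d·uv` with `a b c d : ZMod p`. -/
set_option synthInstance.maxHeartbeats 1000000
set_option maxHeartbeats 1000000

theorem rng_ext {p : ℕ} {x y : Rng p} (h1 : x.fst.fst = y.fst.fst) (h2 : x.fst.snd = y.fst.snd)
    (h3 : x.snd.fst = y.snd.fst) (h4 : x.snd.snd = y.snd.snd) : x = y :=
  TrivSqZeroExt.ext (TrivSqZeroExt.ext h1 h2) (TrivSqZeroExt.ext h3 h4)

theorem mul_c1 {p : ℕ} (x y : Rng p) : (x * y).fst.fst = x.fst.fst * y.fst.fst := by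
  simp

theorem mul_c2 {p : ℕ} (x y : Rng p) :
    (x * y).fst.snd = x.fst.fst * y.fst.snd + x.fst.snd * y.fst.fst := by
  simp [mul_comm]

theorem mul_c3 {p : ℕ} (x y : Rng p) :
    (x * y).snd.fst = x.fst.fst * y.snd.fst + x.snd.fst * y.fst.fst := by
  simp [mul_comm]

theorem mul_c4 {p : ℕ} (x y : Rng p) :
    (x * y).snd.snd = x.fst.fst * y.snd.snd + x.fst.snd * y.snd.fst
      + x.snd.fst * y.fst.snd + x.snd.snd * y.fst.fst := by
  simp
  ring

def mk4 {p : ℕ} (a b c d : ZMod p) : Rng p := ((a, b), (c, d))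

theorem mk4_1 {p : ℕ} (a b c d : ZMod p) : (mk4 a b c d).fst.fst = a := rfl
theorem mk4_2 {p : ℕ} (a b c d : ZMod p) : (mk4 a b c d).fst.snd = b := rfl
theorem mk4_3 {p : ℕ} (a b c d : ZMod p) : (mk4 a b c d).snd.fst = c := rfl
theorem mk4_4 {p : ℕ} (a b c d : ZMod p) : (mk4 a b c d).snd.snd = d := rfl

theorem vtx_zero {p : ℕ} [Fact p.Prime] (x : Vtx p) : x.1.fst.fst = 0 := by
  obtain ⟨x, hx, y, hy, hxy⟩ := x
  by_contra h
  simp only at h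
  apply hy
  have e1 := mul_c1 x y
  have e2 := mul_c2 x y
  have e3 := mul_c3 x y
  have e4 := mul_c4 x y
  rw [hxy] at e1 e2 e3 e4
  simp only [TrivSqZeroExt.fst_zero, TrivSqZeroExt.snd_zero] at e1 e2 e3 e4
  have f1 : y.fst.fst = 0 := by simpa [h] using e1.symm
  have f2 : y.fst.snd = 0 := by simpa [h, f1] using e2.symm
  have f3 : y.snd.fst = 0 := by simpa [h, f1] using e3.symm
  have f4 : y.snd.snd = 0 := by simpa [h, f1, f2, f3] using e4.symm
  exact rng_ext f1 f2 f3 f4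

theorem mul_w {p : ℕ} (x : Rng p) (h : x.fst.fst = 0) : x * mk4 0 0 0 1 = 0 := by
  apply rng_ext
  · rw [mul_c1]; simp [mk4_1, h]
  · rw [mul_c2]; simp [mk4_1, mk4_2, h]
  · rw [mul_c3]; simp [mk4_1, mk4_3, h]
  · rw [mul_c4]; simp [mk4_1, mk4_2, mk4_3, h]

theorem w_ne {p : ℕ} [Fact p.Prime] : (mk4 0 0 0 1 : Rng p) ≠ 0 := by
  intro h
  have := congrArg (fun z : Rng p => z.snd.snd) h
  simp [mk4_4] at this

theorem uv_eq (p : ℕ) : uu p * vv p = mk4 0 0 0 1 := by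
  apply rng_ext
  · rw [mul_c1]; simp [mk4_1, uu, vv]
  · rw [mul_c2]; simp [mk4_2, uu, vv]
  · rw [mul_c3]; simp [mk4_3, uu, vv]
  · rw [mul_c4]; simp [mk4_4, uu, vv]

def wV (p : ℕ) [Fact p.Prime] : Vtx p :=
  ⟨mk4 0 0 0 1, w_ne, mk4 0 0 0 1, w_ne, mul_w _ rfl⟩

theorem adj_w {p : ℕ} [Fact p.Prime] (a : Vtx p) (h : a ≠ wV p) : (ZDG p).Adj a (wV p) :=
  ⟨h, mul_w _ (vtx_zero a)⟩

theorem edist_w {p : ℕ} [Fact p.Prime] (a : Vtx p) : (ZDG p).edist a (wV p) ≤ 1 := by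
  by_cases h : a = wV p
  · subst h; simp
  · exact (SimpleGraph.edist_eq_one_iff_adj.mpr (adj_w a h)).le

theorem two_le {p : ℕ} (a b : Vtx p) (hne : a ≠ b) (h : a.1 * b.1 ≠ 0) :
    2 ≤ (ZDG p).edist a b := by
  have h0 : (ZDG p).edist a b ≠ 0 := by
    simpa [SimpleGraph.edist_eq_zero_iff] using hne
  have h1 : (ZDG p).edist a b ≠ 1 := fun e =>
    h (SimpleGraph.edist_eq_one_iff_adj.mp e).2
  generalize (ZDG p).edist a b = e at h0 h1
  induction e using ENat.recTopCoe with
  | top => exact le_top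
  | coe n =>
    norm_cast at h0 h1 ⊢
    omega

theorem stmt7 (p : ℕ) [Fact p.Prime] (hodd : Odd p) (a : Vtx p)
    (ha : ¬ ∃ x : ZMod p, x ≠ 0 ∧ (a : Rng p) = x • (uu p * vv p)) :
    (⨆ b : Vtx p, (ZDG p).edist a b) = 2 := by
  apply le_antisymm
  · refine iSup_le fun b => ?_
    calc (ZDG p).edist a b ≤ (ZDG p).edist a (wV p) + (ZDG p).edist (wV p) b :=
          SimpleGraph.edist_triangle
      _ ≤ 1 + 1 := by
          refine add_le_add (edist_w a) ?_
          rw [SimpleGraph.edist_comm]; exact edist_w b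
      _ = 2 := by norm_num
  · have a0 := vtx_zero a
    by_cases h1 : a.1.fst.snd = 0
    · have h2 : a.1.snd.fst ≠ 0 := by
        intro h2
        have h3 : a.1.snd.snd ≠ 0 := fun h3 => a.2.1 (rng_ext a0 h1 h2 h3)
        refine ha ⟨a.1.snd.snd, h3, ?_⟩
        rw [uv_eq]
        apply rng_ext
        · simp [mk4_1, a0]
        · simp [mk4_2, h1]
        · simp [mk4_3, h2]
        · simp [mk4_4]
      have hb : (mk4 0 1 0 0 : Rng p) ≠ 0 := by
        intro h
        have := congrArg (fun z : Rng p => z.fst.snd) h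
        simp [mk4_2] at this
      refine le_trans ?_ (le_iSup _ (⟨mk4 0 1 0 0, hb, mk4 0 0 0 1, w_ne, mul_w _ rfl⟩ : Vtx p))
      apply two_le
      · intro h
        rw [h] at h1
        simp [mk4_2] at h1
      · intro h
        have := mul_c4 a.1 (mk4 0 1 0 0)
        simp only at h
        rw [h] at this
        simp [mk4_1, mk4_2, mk4_3, mk4_4] at this
        exact h2 this.symm
    · have hb : (mk4 0 0 1 0 : Rng p) ≠ 0 := by
        intro h
        have := congrArg (fun z : Rng p => z.snd.fst) h
        simp [mk4_3] at this
      refine le_trans ?_ (le_iSup _ (⟨mk4 0 0 1 0, hb, mk4 0 0 0 1, w_ne, mul_w _ rfl⟩ : Vtx p))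
      apply two_le
      · intro h
        rw [h] at h1
        simp [mk4_2] at h1
      · intro h
        have := mul_c4 a.1 (mk4 0 0 1 0)
        simp only at h
        rw [h] at this
        simp [mk4_1, mk4_2, mk4_3, mk4_4] at this
        exact h1 this.symm
end

section
/- −1 is an eigenvalue of the adjacency matrix of Γ(R) (over ℝ) with multiplicity at least p − 2; indeed the vectors e_{uv} − e_{x·uv} for x ∈ 𝔽_p* \ {1} are linearly independent eigenvectors for the eigenvalue −1. -/
/- `Rng p` models the ring `R = 𝔽_p[u,v]/⟨u², v², uv - vu⟩`:
every element is uniquely `a + b·u + c·v + d·uv` with `a b c d : ZMod p`. -/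
set_option synthInstance.maxHeartbeats 1000000
set_option maxHeartbeats 1000000

/-- The adjacency matrix of `Γ(R)` over `ℝ`. -/
def adjMat (p : ℕ) : Matrix (Vtx p) (Vtx p) ℝ :=
  fun a b => if (ZDG p).Adj a b then 1 else 0

/-- The vector `e_{uv} - e_{x·uv}` indexed by the vertices of `Γ(R)`. -/
def evec (p : ℕ) (x : ZMod p) : Vtx p → ℝ := fun a =>
  (if (a : Rng p) = uu p * vv p then 1 else 0) -
  (if (a : Rng p) = x • (uu p * vv p) then 1 else 0)

theorem smul_uv_eq (p : ℕ) (c : ZMod p) :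
    c • (uu p * vv p) = TrivSqZeroExt.inr (TrivSqZeroExt.inr c) := by
  ext <;> simp [uu, vv]

theorem smul_uv_inj (p : ℕ) (c d : ZMod p) (h : c • (uu p * vv p) = d • (uu p * vv p)) :
    c = d := by
  rw [smul_uv_eq, smul_uv_eq] at h
  exact TrivSqZeroExt.inr_injective (TrivSqZeroExt.inr_injective h)

theorem vtx_fst (p : ℕ) [Fact p.Prime] (a : Vtx p) : (a : Rng p).fst.fst = 0 := by
  obtain ⟨a, ha, y, hy, h⟩ := a
  by_contra hne
  have hu : IsUnit a := by
    rw [TrivSqZeroExt.isUnit_iff_isUnit_fst, TrivSqZeroExt.isUnit_iff_isUnit_fst]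
    exact isUnit_iff_ne_zero.mpr hne
  exact hy ((hu.mul_right_eq_zero).mp h)

theorem mul_smul_uv (p : ℕ) (a : Rng p) (ha : a.fst.fst = 0) (c : ZMod p) :
    a * (c • (uu p * vv p)) = 0 := by
  rw [smul_uv_eq]
  ext <;> simp [ha]

/-- The vertex `c·uv`. -/
def WV (p : ℕ) [Fact p.Prime] (c : ZMod p) (hc : c ≠ 0) : Vtx p :=
  ⟨c • (uu p * vv p), fun h => hc (smul_uv_inj p c 0 (by rw [h, zero_smul])),
    c • (uu p * vv p), fun h => hc (smul_uv_inj p c 0 (by rw [h, zero_smul])),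
    mul_smul_uv p _ (by rw [smul_uv_eq]; simp) c⟩

theorem evec_eq (p : ℕ) [Fact p.Prime] (x : ZMod p) (hx : x ≠ 0) :
    evec p x = Pi.single (WV p 1 one_ne_zero) 1 - Pi.single (WV p x hx) 1 := by
  funext a
  simp only [evec, Pi.sub_apply, Pi.single_apply, Subtype.ext_iff, WV, one_smul]

theorem adj_col (p : ℕ) [Fact p.Prime] (c : ZMod p) (hc : c ≠ 0) (a : Vtx p) :
    adjMat p a (WV p c hc) = 1 - (Pi.single (WV p c hc) 1 : Vtx p → ℝ) a := by
  have h : (a : Rng p) * (WV p c hc : Rng p) = 0 := mul_smul_uv p _ (vtx_fst p a) c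
  simp only [adjMat, ZDG, h, Pi.single_apply, and_true]
  by_cases e : a = WV p c hc <;> simp [e]

theorem mulVec_evec (p : ℕ) [Fact p.Prime] (x : ZMod p) (hx : x ≠ 0) :
    (adjMat p).mulVec (evec p x) = (-1 : ℝ) • evec p x := by
  rw [evec_eq p x hx, Matrix.mulVec_sub, Matrix.mulVec_single_one, Matrix.mulVec_single_one]
  funext a
  simp only [Pi.sub_apply, Pi.smul_apply, Matrix.col_apply, adj_col, smul_eq_mul]
  ring

theorem evec_linInd (p : ℕ) [Fact p.Prime] :
    LinearIndependent ℝ (fun x : {x : ZMod p // x ≠ 0 ∧ x ≠ 1} => evec p x.val) := by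
  rw [Fintype.linearIndependent_iff]
  intro g hg y
  have h := congrFun hg (WV p y.1 y.2.1)
  have key : ∀ x : {x : ZMod p // x ≠ 0 ∧ x ≠ 1},
      evec p x.val (WV p y.1 y.2.1) = if x = y then -1 else 0 := by
    intro x
    have h1 : ¬ ((WV p y.1 y.2.1 : Rng p) = uu p * vv p) := fun e =>
      y.2.2 (smul_uv_inj p _ _ (by rw [one_smul]; exact e))
    have h2 : ((WV p y.1 y.2.1 : Rng p) = x.1 • (uu p * vv p)) ↔ x = y :=
      ⟨fun e => Subtype.ext (smul_uv_inj p _ _ e).symm, fun e => by rw [e]; rfl⟩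
    simp only [evec, h1, h2, if_false]
    split_ifs <;> simp
  simpa [Finset.sum_apply, key] using h

theorem stmt12 (p : ℕ) [Fact p.Prime] (hodd : Odd p) :
    (∀ x : ZMod p, x ≠ 0 → x ≠ 1 →
        (adjMat p).mulVec (evec p x) = (-1 : ℝ) • evec p x) ∧
      LinearIndependent ℝ (fun x : {x : ZMod p // x ≠ 0 ∧ x ≠ 1} => evec p x.val) ∧
      p - 2 ≤ Module.finrank ℝ
        (Module.End.eigenspace (Matrix.toLin' (adjMat p)) (-1 : ℝ)) := by
  refine ⟨fun x hx _ => mulVec_evec p x hx, evec_linInd p, ?_⟩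
  let f : {x : ZMod p // x ≠ 0 ∧ x ≠ 1} →
      Module.End.eigenspace (Matrix.toLin' (adjMat p)) (-1 : ℝ) := fun x =>
    ⟨evec p x.1, by
      rw [Module.End.mem_eigenspace_iff, Matrix.toLin'_apply]
      exact mulVec_evec p x.1 x.2.1⟩
  have hf : LinearIndependent ℝ f :=
    LinearIndependent.of_comp (Submodule.subtype _) (evec_linInd p)
  have hc := hf.fintype_card_le_finrank
  refine le_trans ?_ hc
  rw [Fintype.card_subtype]
  have e : (Finset.univ.filter fun x : ZMod p => x ≠ 0 ∧ x ≠ 1) = Finset.univ \ {0, 1} := by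
    ext x; simp
  rw [e]
  refine le_trans ?_ (Finset.le_card_sdiff _ _)
  have h2 : ({0, 1} : Finset (ZMod p)).card ≤ 2 := Finset.card_le_two
  rw [Finset.card_univ, ZMod.card]
  omega
end
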